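/- arXiv:2412.07054 — 2 statements merged into one kernel-verified Lean document; each statement's English description precedes it below -/
import Mathlib

section
/- Define the complex numbers L₁ = F(1/8,3/4) + 2i√2·F(3/8,5/4) + 4·F(5/8,3/4) − 8i√2·F(7/8,5/4) (the L-value L(f_{1/8,3/4},1) of the Hecke eigenform built from the Galois family of 𝕂₂(1/8,3/4), up to normalization) and L₂ = F(1/8,7/8) + 2√2·F(3/8,5/8) + 4i·F(5/8,11/8) + 8i√2·F(7/8,9/8) (similarly for f_{1/8,7/8}). Then L₁² = (2 − √2 − 4i·(√2 − 1))·L₂² (note √(3 − 2√2) = √2 − 1, so the constant is 2 − √2 − 4i√(3−2√2)). -/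
/-- The Pochhammer symbol (x)_k = x(x+1)⋯(x+k−1). -/
noncomputable def poch (x : ℝ) (k : ℕ) : ℝ := ∏ i ∈ Finset.range k, (x + i)

/-- The hypergeometric series ₃F₂(a1,a2,a3;b1,b2;1). -/
noncomputable def threeF2 (a1 a2 a3 b1 b2 : ℝ) : ℝ :=
  ∑' k : ℕ, poch a1 k * poch a2 k * poch a3 k /
    (poch b1 k * poch b2 k * (Nat.factorial k : ℝ))

/-- The Beta function B(a,b) = Γ(a)Γ(b)/Γ(a+b). -/
noncomputable def betaFn (a b : ℝ) : ℝ :=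
  Real.Gamma a * Real.Gamma b / Real.Gamma (a + b)

/-- The normalized hypergeometric value
F(r,s) = (2^{1−4r}·B(r,s−r)/N(r)) · ₃F₂(1/2,1/2,r;1,s;1), where N(r) = 2·den(r). -/
noncomputable def Fval (r s : ℚ) : ℝ :=
  (2:ℝ) ^ ((1:ℝ) - 4 * (r:ℝ)) * betaFn (r:ℝ) ((s:ℝ) - (r:ℝ)) / (2 * (r.den : ℝ)) *
    threeF2 (1/2) (1/2) (r:ℝ) 1 (s:ℝ)

section EulerIntegrals

open MeasureTheory Set
open scoped ENNReal

lemma poch_pos {x : ℝ} (hx : 0 < x) (n : ℕ) : 0 < poch x n :=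
  Finset.prod_pos fun i _ => by positivity

lemma poch_eq_ascPochhammer (x : ℝ) (n : ℕ) : poch x n = (ascPochhammer ℕ n).smeval x := by
  induction n with
  | zero => simp [poch]
  | succ n ih =>
    rw [poch, Finset.prod_range_succ, ← poch, ih, ascPochhammer_succ_right,
      Polynomial.smeval_mul]
    simp [Polynomial.smeval_add, Polynomial.smeval_X, Polynomial.smeval_natCast]

lemma Gamma_add_nat_eq_poch_mul {x : ℝ} (hx : 0 < x) (n : ℕ) :
    Real.Gamma (x + n) = poch x n * Real.Gamma x := by
  induction n with
  | zero => simp [poch]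
  | succ n ih =>
    rw [poch, Finset.prod_range_succ, ← poch, Nat.cast_succ, ← add_assoc,
      Real.Gamma_add_one (by positivity), ih]
    ring

lemma betaFn_pos {a b : ℝ} (ha : 0 < a) (hb : 0 < b) : 0 < betaFn a b :=
  ProbabilityTheory.beta_pos ha hb

lemma betaFn_comm (a b : ℝ) : betaFn a b = betaFn b a := by
  rw [betaFn, betaFn, mul_comm, add_comm]

lemma betaFn_add_nat {a b : ℝ} (ha : 0 < a) (hb : 0 < b) (n : ℕ) :
    betaFn (a + n) b = betaFn a b * (poch a n / poch (a + b) n) := by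
  have h1 := (poch_pos (add_pos ha hb) n).ne'
  have h2 := (Real.Gamma_pos_of_pos (add_pos ha hb)).ne'
  rw [betaFn, betaFn, add_right_comm, Gamma_add_nat_eq_poch_mul ha,
    Gamma_add_nat_eq_poch_mul (add_pos ha hb)]
  field_simp

lemma hasSum_poch_mul_pow (a : ℝ) {z : ℝ} (hz : |z| < 1) :
    HasSum (fun n : ℕ => poch a n / n.factorial * z ^ n) ((1 - z) ^ (-a)) := by
  have h := (Real.one_div_one_sub_rpow_hasFPowerSeriesOnBall_zero a).hasSum (y := z)
    (by simpa [enorm_eq_nnnorm, ← NNReal.coe_lt_one] using hz)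
  simp only [FormalMultilinearSeries.ofScalars_apply_eq, smul_eq_mul, zero_add] at h
  rw [Real.rpow_neg (by linarith [le_abs_self z]), ← one_div]
  refine h.congr_fun fun n => ?_
  congr 1
  rw [Ring.choose, poch_eq_ascPochhammer, ← Ring.factorial_nsmul_multichoose_eq_ascPochhammer,
    nsmul_eq_mul, mul_div_cancel_left₀ _ (by positivity)]
  congr 1
  ring

/-- The measure on `(0, 1)` with density `x ^ (b - 1) * (1 - x) ^ (c - 1)`. -/
noncomputable def jacobiMeasure (b c : ℝ) : Measure ℝ :=
  (volume.restrict (Ioo 0 1)).withDensity fun x => ENNReal.ofReal (x ^ (b - 1) * (1 - x) ^ (c - 1))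

instance (b c : ℝ) : SFinite (jacobiMeasure b c) := by
  unfold jacobiMeasure; infer_instance

lemma lintegral_jacobiMeasure (b c : ℝ) (f : ℝ → ℝ≥0∞) :
    ∫⁻ x, f x ∂jacobiMeasure b c =
      ∫⁻ x in Ioo 0 1, ENNReal.ofReal (x ^ (b - 1) * (1 - x) ^ (c - 1)) * f x := by
  rw [jacobiMeasure, lintegral_withDensity_eq_lintegral_mul_non_measurable]
  · rfl
  · fun_prop
  · simp

lemma lintegral_jacobiMeasure_congr {b c b' c' : ℝ} {f g : ℝ → ℝ≥0∞}
    (h : ∀ x ∈ Ioo (0 : ℝ) 1, ENNReal.ofReal (x ^ (b - 1) * (1 - x) ^ (c - 1)) * f x =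
      ENNReal.ofReal (x ^ (b' - 1) * (1 - x) ^ (c' - 1)) * g x) :
    ∫⁻ x, f x ∂jacobiMeasure b c = ∫⁻ x, g x ∂jacobiMeasure b' c' := by
  rw [lintegral_jacobiMeasure, lintegral_jacobiMeasure]
  exact setLIntegral_congr_fun measurableSet_Ioo h

lemma lintegral_jacobiMeasure_congr_right (b c : ℝ) {f g : ℝ → ℝ≥0∞}
    (h : ∀ x ∈ Ioo (0 : ℝ) 1, f x = g x) :
    ∫⁻ x, f x ∂jacobiMeasure b c = ∫⁻ x, g x ∂jacobiMeasure b c :=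
  lintegral_jacobiMeasure_congr fun x hx => by rw [h x hx]

/-- Shifting the exponents of `jacobiMeasure` by absorbing powers into the integrand. -/
lemma lintegral_jacobiMeasure_add (b c d e : ℝ) (f : ℝ → ℝ≥0∞) :
    ∫⁻ x, ENNReal.ofReal (x ^ d * (1 - x) ^ e) * f x ∂jacobiMeasure b c =
      ∫⁻ x, f x ∂jacobiMeasure (b + d) (c + e) := by
  refine lintegral_jacobiMeasure_congr fun x hx => ?_
  have h0 : 0 < x := hx.1
  have h1 : 0 < 1 - x := sub_pos.2 hx.2
  rw [← mul_assoc, ← ENNReal.ofReal_mul (by positivity), mul_mul_mul_comm, ← Real.rpow_add h0,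
    ← Real.rpow_add h1, sub_add_eq_add_sub, sub_add_eq_add_sub]

lemma lintegral_jacobiMeasure_one {b c : ℝ} (hb : 0 < b) (hc : 0 < c) :
    ∫⁻ _, 1 ∂jacobiMeasure b c = ENNReal.ofReal (betaFn b c) := by
  have h := ProbabilityTheory.lintegral_betaPDF_eq_one hb hc
  have hB := betaFn_pos hb hc
  rw [ProbabilityTheory.lintegral_betaPDF] at h
  simp_rw [lintegral_jacobiMeasure, mul_one]
  rw [← mul_one (ENNReal.ofReal (betaFn b c)), ← h, ← lintegral_const_mul' _ _ ENNReal.ofReal_ne_top]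
  refine lintegral_congr fun x => ?_
  rw [← ENNReal.ofReal_mul hB.le]
  congr 1
  change _ = betaFn b c * (1 / betaFn b c * _ * _)
  field_simp

lemma lintegral_jacobiMeasure_pow {b c : ℝ} (hb : 0 < b) (hc : 0 < c) (n : ℕ) :
    ∫⁻ x, ENNReal.ofReal (x ^ n) ∂jacobiMeasure b c = ENNReal.ofReal (betaFn (b + n) c) := by
  rw [← lintegral_jacobiMeasure_one (by positivity) hc]
  have h := lintegral_jacobiMeasure_add b c n 0 1
  simpa using h

/-- Reflection `x ↦ 1 - x`. -/
lemma lintegral_jacobiMeasure_one_sub (b c : ℝ) (f : ℝ → ℝ≥0∞) :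
    ∫⁻ x, f (1 - x) ∂jacobiMeasure b c = ∫⁻ x, f x ∂jacobiMeasure c b := by
  rw [lintegral_jacobiMeasure, lintegral_jacobiMeasure]
  have h := lintegral_image_eq_lintegral_abs_deriv_mul (s := Ioo (0 : ℝ) 1) (f := fun x => 1 - x)
    (f' := fun _ => -1) measurableSet_Ioo
    (fun x _ => ((hasDerivAt_id x).const_sub 1).hasDerivWithinAt) (sub_right_injective.injOn)
    (fun x => ENNReal.ofReal (x ^ (c - 1) * (1 - x) ^ (b - 1)) * f x)
  rw [image_const_sub_Ioo, sub_zero, sub_self] at h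
  rw [h]
  refine lintegral_congr fun x => ?_
  simp [mul_comm]

/-- The Euler-type double integral attached to `₃F₂(1)`. -/
noncomputable def eulerDouble (a b b' c c' : ℝ) : ℝ≥0∞ :=
  ∫⁻ y, ∫⁻ x, ENNReal.ofReal ((1 - x * y) ^ (-a)) ∂jacobiMeasure b b' ∂jacobiMeasure c c'

lemma lintegral_jacobiMeasure_one_sub_mul {a b c : ℝ} (ha : 0 < a) (hb : 0 < b) (hc : 0 < c)
    {y : ℝ} (hy : y ∈ Ioo (0 : ℝ) 1) :
    ∫⁻ x, ENNReal.ofReal ((1 - x * y) ^ (-a)) ∂jacobiMeasure b c =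
      ∑' n : ℕ, ENNReal.ofReal (poch a n / n.factorial * betaFn (b + n) c) *
        ENNReal.ofReal (y ^ n) := by
  have h : ∀ x ∈ Ioo (0 : ℝ) 1, ENNReal.ofReal ((1 - x * y) ^ (-a)) =
      ∑' n : ℕ, ENNReal.ofReal (poch a n / n.factorial * y ^ n) * ENNReal.ofReal (x ^ n) := by
    intro x hx
    have hxy : 0 < x * y := mul_pos hx.1 hy.1
    have hxy1 : x * y < 1 := mul_lt_one_of_nonneg_of_lt_one_left hx.1.le hx.2 hy.2.le
    have hs := hasSum_poch_mul_pow a (z := x * y) (by rwa [abs_of_pos hxy])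
    rw [← hs.tsum_eq, ENNReal.ofReal_tsum_of_nonneg _ hs.summable]
    · refine tsum_congr fun n => ?_
      have := poch_pos ha n
      have := hy.1
      rw [← ENNReal.ofReal_mul (by positivity)]
      congr 1
      rw [mul_pow]; ring
    · intro n
      have := poch_pos ha n
      positivity
  rw [lintegral_jacobiMeasure_congr_right _ _ h, lintegral_tsum (fun n => by fun_prop)]
  refine tsum_congr fun n => ?_
  have := poch_pos ha n
  have := hy.1
  have := betaFn_pos (show 0 < b + n by positivity) hc
  rw [lintegral_const_mul' _ _ ENNReal.ofReal_ne_top, lintegral_jacobiMeasure_pow hb hc,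
    ← ENNReal.ofReal_mul (by positivity), ← ENNReal.ofReal_mul (by positivity)]
  congr 1; ring

/-- Euler's integral representation of `₃F₂(1)`. -/
lemma toReal_eulerDouble {a b b' c c' : ℝ} (ha : 0 < a) (hb : 0 < b) (hb' : 0 < b') (hc : 0 < c)
    (hc' : 0 < c') :
    (eulerDouble a b b' c c').toReal =
      betaFn b b' * betaFn c c' * threeF2 a b c (b + b') (c + c') := by
  have h : eulerDouble a b b' c c' = ∑' n : ℕ, ENNReal.ofReal (betaFn b b' * betaFn c c' *
      (poch a n * poch b n * poch c n /
        (poch (b + b') n * poch (c + c') n * (n.factorial : ℝ)))) := by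
    rw [eulerDouble, lintegral_jacobiMeasure_congr_right _ _
      fun y hy => lintegral_jacobiMeasure_one_sub_mul ha hb hb' hy,
      lintegral_tsum (fun n => by fun_prop)]
    refine tsum_congr fun n => ?_
    have := poch_pos ha n
    have := betaFn_pos (show 0 < b + n by positivity) hb'
    rw [lintegral_const_mul' _ _ ENNReal.ofReal_ne_top, lintegral_jacobiMeasure_pow hc hc',
      ← ENNReal.ofReal_mul (by positivity), betaFn_add_nat hb hb', betaFn_add_nat hc hc']
    congr 1
    have := poch_pos (add_pos hb hb') n
    have := poch_pos (add_pos hc hc') n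
    field_simp
  rw [h, ENNReal.tsum_toReal_eq (fun _ => ENNReal.ofReal_ne_top), threeF2, ← tsum_mul_left]
  refine tsum_congr fun n => ENNReal.toReal_ofReal ?_
  have := poch_pos ha n
  have := poch_pos hb n
  have := poch_pos hc n
  have := poch_pos (add_pos hb hb') n
  have := poch_pos (add_pos hc hc') n
  have := betaFn_pos hb hb'
  have := betaFn_pos hc hc'
  positivity

/-- Euler's transformation, via the involution `x ↦ (1 - x) / (1 - x * w)` of `(0, 1)`. -/
lemma lintegral_jacobiMeasure_euler (a b c : ℝ) {w : ℝ} (hw : w ∈ Ioo (0 : ℝ) 1) :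
    ∫⁻ x, ENNReal.ofReal ((1 - x * w) ^ (-a)) ∂jacobiMeasure b c =
      ENNReal.ofReal ((1 - w) ^ (c - a)) *
        ∫⁻ x, ENNReal.ofReal ((1 - x * w) ^ (-(b + c - a))) ∂jacobiMeasure c b := by
  have hp : 0 < 1 - w := sub_pos.2 hw.2
  have hq : ∀ x ∈ Ioo (0 : ℝ) 1, 0 < 1 - x * w := fun x hx =>
    sub_pos.2 (mul_lt_one_of_nonneg_of_lt_one_left hx.1.le hx.2 hw.2.le)
  have hmaps : ∀ x ∈ Ioo (0 : ℝ) 1, (1 - x) / (1 - x * w) ∈ Ioo (0 : ℝ) 1 := by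
    intro x hx
    refine ⟨div_pos (sub_pos.2 hx.2) (hq x hx), (div_lt_one (hq x hx)).2 ?_⟩
    nlinarith [mul_pos hx.1 hp]
  have hinv : ∀ x ∈ Ioo (0 : ℝ) 1,
      (1 - (1 - x) / (1 - x * w)) / (1 - (1 - x) / (1 - x * w) * w) = x := by
    intro x hx
    have h1 := (hq x hx).ne'
    have h2 : 1 - (1 - x) / (1 - x * w) = x * (1 - w) / (1 - x * w) := by field_simp; ring
    have h3 : 1 - (1 - x) / (1 - x * w) * w = (1 - w) / (1 - x * w) := by field_simp; ring
    rw [h2, h3]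
    field_simp
  have himage : (fun x => (1 - x) / (1 - x * w)) '' Ioo (0 : ℝ) 1 = Ioo 0 1 := by
    refine Subset.antisymm (image_subset_iff.2 hmaps) fun x hx => ⟨_, hmaps x hx, hinv x hx⟩
  have hderiv : ∀ x ∈ Ioo (0 : ℝ) 1, HasDerivWithinAt (fun x => (1 - x) / (1 - x * w))
      (-((1 - w) / (1 - x * w) ^ 2)) (Ioo 0 1) x := by
    intro x hx
    have h := ((hasDerivAt_id x).const_sub 1).div
      (((hasDerivAt_id x).mul_const w).const_sub 1) (hq x hx).ne'
    refine (h.congr_deriv ?_).hasDerivWithinAt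
    simp only [id]
    ring
  have h := lintegral_image_eq_lintegral_abs_deriv_mul measurableSet_Ioo hderiv
    (LeftInvOn.injOn (f₁' := fun x => (1 - x) / (1 - x * w)) hinv)
    (fun x => ENNReal.ofReal (x ^ (b - 1) * (1 - x) ^ (c - 1)) *
      ENNReal.ofReal ((1 - x * w) ^ (-a)))
  rw [himage] at h
  rw [lintegral_jacobiMeasure, h, lintegral_jacobiMeasure,
    ← lintegral_const_mul' _ _ ENNReal.ofReal_ne_top]
  refine setLIntegral_congr_fun measurableSet_Ioo fun x hx => ?_
  have h0 : 0 < x := hx.1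
  have h1 : 0 < 1 - x := sub_pos.2 hx.2
  have h2 := hq x hx
  have e1 : 1 - (1 - x) / (1 - x * w) = x * (1 - w) / (1 - x * w) := by field_simp; ring
  have e2 : 1 - (1 - x) / (1 - x * w) * w = (1 - w) / (1 - x * w) := by field_simp; ring
  simp only [e1, e2, abs_neg]
  rw [abs_of_pos (by positivity), ← ENNReal.ofReal_mul (by positivity),
    ← ENNReal.ofReal_mul (by positivity), ← ENNReal.ofReal_mul (by positivity),
    ← ENNReal.ofReal_mul (by positivity)]
  congr 1
  generalize 1 - x * w = q at *
  generalize 1 - x = u at *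
  generalize 1 - w = p at *
  rw [← Real.exp_log h0, ← Real.exp_log h1, ← Real.exp_log h2, ← Real.exp_log hp,
    ← Real.exp_nat_mul]
  simp only [← Real.exp_sub, ← Real.exp_add, ← Real.exp_mul]
  congr 1
  push_cast
  ring

/-- Thomae's two-term transformation. -/
lemma eulerDouble_thomae (a b b' c c' : ℝ) :
    eulerDouble a b b' c c' = eulerDouble (b + b' - a) b' b c (c' + b' - a) := by
  rw [eulerDouble, lintegral_jacobiMeasure_congr_right _ _
    fun y hy => lintegral_jacobiMeasure_euler a b b' hy]
  refine lintegral_jacobiMeasure_congr fun y hy => ?_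
  have h0 : 0 < y := hy.1
  have h1 : 0 < 1 - y := sub_pos.2 hy.2
  rw [← mul_assoc, ← ENNReal.ofReal_mul (by positivity), mul_assoc, ← Real.rpow_add h1]
  congr 4
  ring

/-- The substitution `x = c * (1 - t) / t`. -/
lemma setLIntegral_Ioi_eq_setLIntegral_Ioo {c : ℝ} (hc : 0 < c) (g : ℝ → ℝ≥0∞) :
    ∫⁻ x in Ioi 0, g x = ∫⁻ t in Ioo 0 1, ENNReal.ofReal (c / t ^ 2) * g (c * (1 - t) / t) := by
  have himage : (fun t => c * (1 - t) / t) '' Ioo (0 : ℝ) 1 = Ioi 0 := by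
    ext x
    constructor
    · rintro ⟨t, ht, rfl⟩
      exact div_pos (mul_pos hc (sub_pos.2 ht.2)) ht.1
    · intro hx
      have hx : 0 < x := hx
      refine ⟨c / (x + c), ⟨by positivity, (div_lt_one (by positivity)).2 (by linarith)⟩, ?_⟩
      field_simp
      ring
  have hderiv : ∀ t ∈ Ioo (0 : ℝ) 1,
      HasDerivWithinAt (fun t => c * (1 - t) / t) (-(c / t ^ 2)) (Ioo 0 1) t := by
    intro t ht
    have h := (((hasDerivAt_id t).const_sub 1).const_mul c).div (hasDerivAt_id t) ht.1.ne'
    refine (h.congr_deriv ?_).hasDerivWithinAt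
    simp only [id]
    ring
  have hinj : InjOn (fun t => c * (1 - t) / t) (Ioo (0 : ℝ) 1) := by
    refine LeftInvOn.injOn (f₁' := fun x => c / (x + c)) fun t ht => ?_
    have := ht.1
    field_simp
    ring
  rw [← himage, lintegral_image_eq_lintegral_abs_deriv_mul measurableSet_Ioo hderiv hinj]
  refine setLIntegral_congr_fun measurableSet_Ioo fun t ht => ?_
  have := ht.1
  simp only [abs_neg]
  rw [abs_of_pos (by positivity)]

lemma setLIntegral_rpow_div_add {a c : ℝ} (ha : 0 < a) (ha1 : a < 1) (hc : 0 < c) :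
    ∫⁻ x in Ioi 0, ENNReal.ofReal (x ^ (a - 1) / (x + c)) =
      ENNReal.ofReal (betaFn a (1 - a) * c ^ (a - 1)) := by
  rw [setLIntegral_Ioi_eq_setLIntegral_Ioo hc, mul_comm, betaFn_comm,
    ENNReal.ofReal_mul (by positivity), ← lintegral_jacobiMeasure_one (sub_pos.2 ha1) ha,
    lintegral_jacobiMeasure, ← lintegral_const_mul' _ _ ENNReal.ofReal_ne_top]
  refine setLIntegral_congr_fun measurableSet_Ioo fun t ht => ?_
  have h0 : 0 < t := ht.1
  have h1 : 0 < 1 - t := sub_pos.2 ht.2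
  have e : c * (1 - t) / t + c = c / t := by field_simp; ring
  simp only [e, mul_one]
  rw [← ENNReal.ofReal_mul (by positivity), ← ENNReal.ofReal_mul (by positivity)]
  congr 1
  generalize 1 - t = u at *
  rw [← Real.exp_log h0, ← Real.exp_log h1, ← Real.exp_log hc, ← Real.exp_nat_mul]
  simp only [← Real.exp_sub, ← Real.exp_add, ← Real.exp_mul]
  congr 1
  push_cast
  ring

/-- The Stieltjes representation of `w ^ q * (1 - w) ^ (β - 1)` on the cut plane
`ℂ \ ((-∞, 0] ∪ [1, ∞))`, restricted to `(0, 1)`. -/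
lemma stieltjes_rpow_mul_rpow {β q w : ℝ} (hβ : 0 < β) (hβ1 : β < 1) (hq : 0 < q) (hq1 : q < 1)
    (hw : w ∈ Ioo (0 : ℝ) 1) :
    ENNReal.ofReal (betaFn q (1 - q)) *
        ∫⁻ x in Ioi 0, ENNReal.ofReal (x ^ (β - 1) * (1 + x) ^ q / (x + (1 - w))) =
      ENNReal.ofReal (betaFn β (1 - β) * betaFn q (1 - q) * (w ^ q * (1 - w) ^ (β - 1))) +
        ENNReal.ofReal (betaFn β (1 - β)) *
          ∫⁻ y in Ioi 0, ENNReal.ofReal (y ^ q * (1 + y) ^ (β - 1) / (y + w)) := by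
  have hw0 : 0 < w := hw.1
  have hw1 : 0 < 1 - w := sub_pos.2 hw.2
  have hMβ := betaFn_pos hβ (sub_pos.2 hβ1)
  have hMq := betaFn_pos hq (sub_pos.2 hq1)
  have hL : ∫⁻ x in Ioi 0, ∫⁻ y in Ioi 0, ENNReal.ofReal
        (x ^ (β - 1) * (1 + x) / (x + (1 - w)) * (y ^ (q - 1) / (y + (1 + x)))) =
      ENNReal.ofReal (betaFn q (1 - q)) *
        ∫⁻ x in Ioi 0, ENNReal.ofReal (x ^ (β - 1) * (1 + x) ^ q / (x + (1 - w))) := by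
    rw [← lintegral_const_mul' _ _ ENNReal.ofReal_ne_top]
    refine setLIntegral_congr_fun measurableSet_Ioi fun x hx => ?_
    have hx : 0 < x := hx
    have h1 : 0 < 1 + x := by positivity
    simp_rw [ENNReal.ofReal_mul (show 0 ≤ x ^ (β - 1) * (1 + x) / (x + (1 - w)) by positivity)]
    rw [lintegral_const_mul' _ _ ENNReal.ofReal_ne_top, setLIntegral_rpow_div_add hq hq1 h1,
      ← ENNReal.ofReal_mul (by positivity), ← ENNReal.ofReal_mul (by positivity),
      Real.rpow_sub_one h1.ne']
    congr 1
    field_simp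
  have hP : ∫⁻ x in Ioi 0, ∫⁻ y in Ioi 0, ENNReal.ofReal
        (x ^ (β - 1) / (x + (1 - w)) * (w * (y ^ (q - 1) / (y + w)))) =
      ENNReal.ofReal (betaFn β (1 - β) * betaFn q (1 - q) * (w ^ q * (1 - w) ^ (β - 1))) := by
    have : ∀ x ∈ Ioi (0 : ℝ), ∫⁻ y in Ioi 0, ENNReal.ofReal
        (x ^ (β - 1) / (x + (1 - w)) * (w * (y ^ (q - 1) / (y + w)))) =
        ENNReal.ofReal (betaFn q (1 - q) * w ^ q) *
          ENNReal.ofReal (x ^ (β - 1) / (x + (1 - w))) := by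
      intro x hx
      have hx : 0 < x := hx
      simp_rw [ENNReal.ofReal_mul (show 0 ≤ x ^ (β - 1) / (x + (1 - w)) by positivity),
        ENNReal.ofReal_mul hw0.le]
      rw [lintegral_const_mul' _ _ ENNReal.ofReal_ne_top,
        lintegral_const_mul' _ _ ENNReal.ofReal_ne_top, setLIntegral_rpow_div_add hq hq1 hw0,
        mul_comm, ← ENNReal.ofReal_mul hw0.le, Real.rpow_sub_one hw0.ne']
      congr 2
      field_simp
    rw [setLIntegral_congr_fun measurableSet_Ioi this,
      lintegral_const_mul' _ _ ENNReal.ofReal_ne_top, setLIntegral_rpow_div_add hβ hβ1 hw1,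
      ← ENNReal.ofReal_mul (by positivity)]
    congr 1
    ring
  have hR : ∫⁻ x in Ioi 0, ∫⁻ y in Ioi 0, ENNReal.ofReal
        (y ^ q / (y + w) * (x ^ (β - 1) / (x + (1 + y)))) =
      ENNReal.ofReal (betaFn β (1 - β)) *
        ∫⁻ y in Ioi 0, ENNReal.ofReal (y ^ q * (1 + y) ^ (β - 1) / (y + w)) := by
    rw [lintegral_lintegral_swap (by fun_prop), ← lintegral_const_mul' _ _ ENNReal.ofReal_ne_top]
    refine setLIntegral_congr_fun measurableSet_Ioi fun y hy => ?_
    have hy : 0 < y := hy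
    have h1 : 0 < 1 + y := by positivity
    simp_rw [ENNReal.ofReal_mul (show 0 ≤ y ^ q / (y + w) by positivity)]
    rw [lintegral_const_mul' _ _ ENNReal.ofReal_ne_top, setLIntegral_rpow_div_add hβ hβ1 h1,
      ← ENNReal.ofReal_mul (by positivity), ← ENNReal.ofReal_mul (by positivity)]
    congr 1
    field_simp
  rw [← hL, ← hP, ← hR, ← lintegral_add_left (by fun_prop)]
  refine setLIntegral_congr_fun measurableSet_Ioi fun x hx => ?_
  rw [← lintegral_add_left (by fun_prop)]
  refine setLIntegral_congr_fun measurableSet_Ioi fun y hy => ?_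
  have hx : 0 < x := hx
  have hy : 0 < y := hy
  rw [← ENNReal.ofReal_add (by positivity) (by positivity)]
  congr 1
  rw [Real.rpow_sub_one hy.ne']
  have e1 : x + (1 - w) ≠ 0 := by positivity
  field_simp
  ring

lemma betaFn_half_half : betaFn (1 / 2) (1 / 2) = Real.pi := by
  rw [betaFn, add_halves, Real.Gamma_one, Real.Gamma_one_half_eq, div_one,
    Real.mul_self_sqrt Real.pi_pos.le]

lemma lintegral_arcsine_inv_add_mul {A B : ℝ} (hA : 0 < A) (hAB : 0 < A + B) :
    ∫⁻ v, ENNReal.ofReal ((A + v * B)⁻¹) ∂jacobiMeasure (1 / 2) (1 / 2) =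
      ENNReal.ofReal Real.pi * ENNReal.ofReal (A ^ (-(1 / 2) : ℝ) * (A + B) ^ (-(1 / 2) : ℝ)) := by
  have hc : 0 < (A + B) / A := div_pos hAB hA
  have h := setLIntegral_rpow_div_add one_half_pos one_half_lt_one hc
  have e : (1 : ℝ) - 1 / 2 = 1 / 2 := by norm_num
  rw [setLIntegral_Ioi_eq_setLIntegral_Ioo one_pos, e, betaFn_half_half] at h
  have h2 : ENNReal.ofReal Real.pi *
      ENNReal.ofReal (A ^ (-(1 / 2) : ℝ) * (A + B) ^ (-(1 / 2) : ℝ)) =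
      ENNReal.ofReal A⁻¹ * ENNReal.ofReal (Real.pi * ((A + B) / A) ^ ((1 / 2 : ℝ) - 1)) := by
    rw [← ENNReal.ofReal_mul Real.pi_pos.le, ← ENNReal.ofReal_mul (by positivity)]
    congr 1
    rw [mul_left_comm A⁻¹]
    refine congrArg (Real.pi * ·) ?_
    generalize A + B = C at *
    rw [← Real.exp_log hAB, ← Real.exp_log hA]
    simp only [← Real.exp_sub, ← Real.exp_add, ← Real.exp_mul, ← Real.exp_neg]
    congr 1
    ring
  rw [h2, ← h, lintegral_jacobiMeasure, ← lintegral_const_mul' _ _ ENNReal.ofReal_ne_top]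
  refine setLIntegral_congr_fun measurableSet_Ioo fun t ht => ?_
  have h0 : 0 < t := ht.1
  have h1 : 0 < 1 - t := sub_pos.2 ht.2
  have h3 : 0 < A + t * B := by nlinarith [mul_pos h1 hA, mul_pos h0 hAB]
  have e1 : 1 * (1 - t) / t + (A + B) / A = (A + t * B) / (A * t) := by field_simp; ring
  simp only [e1]
  rw [← ENNReal.ofReal_mul (by positivity), ← ENNReal.ofReal_mul (by positivity),
    ← ENNReal.ofReal_mul (by positivity)]
  congr 1
  generalize A + t * B = C at *
  generalize 1 - t = u at *
  rw [one_mul, ← Real.exp_log h0, ← Real.exp_log h1, ← Real.exp_log h3, ← Real.exp_log hA,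
    ← Real.exp_nat_mul]
  simp only [one_div, ← Real.exp_sub, ← Real.exp_add, ← Real.exp_mul, ← Real.exp_neg]
  congr 1
  push_cast
  ring

lemma setLIntegral_Ioi_eq_jacobi_left (β q : ℝ) {w : ℝ} (hw : w ∈ Ioo (0 : ℝ) 1) :
    ∫⁻ x in Ioi 0, ENNReal.ofReal (x ^ (β - 1) * (1 + x) ^ q / (x + (1 - w))) =
      ∫⁻ t, ENNReal.ofReal ((1 - t * w)⁻¹) ∂jacobiMeasure (1 - q - β) β := by
  rw [setLIntegral_Ioi_eq_setLIntegral_Ioo one_pos, lintegral_jacobiMeasure]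
  refine setLIntegral_congr_fun measurableSet_Ioo fun t ht => ?_
  have h0 : 0 < t := ht.1
  have h1 : 0 < 1 - t := sub_pos.2 ht.2
  have h3 : 0 < 1 - t * w :=
    sub_pos.2 (mul_lt_one_of_nonneg_of_lt_one_left ht.1.le ht.2 hw.2.le)
  have e1 : 1 * (1 - t) / t + (1 - w) = (1 - t * w) / t := by field_simp; ring
  have e2 : 1 + 1 * (1 - t) / t = 1 / t := by field_simp; ring
  simp only [e1, e2]
  rw [← ENNReal.ofReal_mul (by positivity), ← ENNReal.ofReal_mul (by positivity)]
  congr 1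
  generalize 1 - t * w = C at *
  generalize 1 - t = u at *
  rw [one_mul, ← Real.exp_log h0, ← Real.exp_log h1, ← Real.exp_log h3, ← Real.exp_nat_mul]
  simp only [one_div, ← Real.exp_sub, ← Real.exp_add, ← Real.exp_mul, ← Real.exp_neg]
  congr 1
  push_cast
  ring

lemma setLIntegral_Ioi_eq_jacobi_right (β q : ℝ) {w : ℝ} (hw : w ∈ Ioo (0 : ℝ) 1) :
    ∫⁻ y in Ioi 0, ENNReal.ofReal (y ^ q * (1 + y) ^ (β - 1) / (y + w)) =
      ∫⁻ t, ENNReal.ofReal ((1 - t + t * w)⁻¹) ∂jacobiMeasure (1 - q - β) (q + 1) := by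
  rw [setLIntegral_Ioi_eq_setLIntegral_Ioo one_pos, lintegral_jacobiMeasure]
  refine setLIntegral_congr_fun measurableSet_Ioo fun t ht => ?_
  have h0 : 0 < t := ht.1
  have h1 : 0 < 1 - t := sub_pos.2 ht.2
  have hw0 : 0 < w := hw.1
  have h3 : 0 < 1 - t + t * w := by positivity
  have e1 : 1 * (1 - t) / t + w = (1 - t + t * w) / t := by field_simp
  have e2 : 1 + 1 * (1 - t) / t = 1 / t := by field_simp; ring
  simp only [e1, e2]
  rw [← ENNReal.ofReal_mul (by positivity), ← ENNReal.ofReal_mul (by positivity)]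
  congr 1
  generalize 1 - t + t * w = C at *
  generalize 1 - t = u at *
  rw [one_mul, ← Real.exp_log h0, ← Real.exp_log h1, ← Real.exp_log h3, ← Real.exp_nat_mul]
  simp only [one_div, ← Real.exp_sub, ← Real.exp_add, ← Real.exp_mul, ← Real.exp_neg]
  congr 1
  push_cast
  ring

lemma mul_mem_Ioo_zero_one {u v : ℝ} (hu : u ∈ Ioo (0 : ℝ) 1) (hv : v ∈ Ioo (0 : ℝ) 1) :
    u * v ∈ Ioo (0 : ℝ) 1 :=
  ⟨mul_pos hu.1 hv.1, mul_lt_one_of_nonneg_of_lt_one_left hu.1.le hu.2 hv.2.le⟩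

lemma lintegral_arcsine_inv_one_sub (b c : ℝ) :
    ∫⁻ u, ∫⁻ v, ∫⁻ t, ENNReal.ofReal ((1 - t * (u * v))⁻¹) ∂jacobiMeasure b c
        ∂jacobiMeasure (1 / 2) (1 / 2) ∂jacobiMeasure (1 / 2) (1 / 2) =
      ENNReal.ofReal Real.pi * eulerDouble (1 / 2) b c (1 / 2) (1 / 2) := by
  rw [eulerDouble, ← lintegral_const_mul' _ _ ENNReal.ofReal_ne_top]
  refine lintegral_jacobiMeasure_congr_right _ _ fun u hu => ?_
  rw [lintegral_lintegral_swap (by fun_prop), ← lintegral_const_mul' _ _ ENNReal.ofReal_ne_top]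
  refine lintegral_jacobiMeasure_congr_right _ _ fun t ht => ?_
  have h := lintegral_arcsine_inv_add_mul (A := 1) (B := -(t * u)) one_pos
    (by have := (mul_mem_Ioo_zero_one ht hu).2; linarith)
  rw [Real.one_rpow, one_mul, ← sub_eq_add_neg] at h
  rw [← h]
  refine lintegral_congr fun v => ?_
  congr 2
  ring

lemma lintegral_arcsine_inv_one_sub_add (b c : ℝ) :
    ∫⁻ u, ∫⁻ v, ∫⁻ t, ENNReal.ofReal ((1 - t + t * (u * v))⁻¹) ∂jacobiMeasure b c
        ∂jacobiMeasure (1 / 2) (1 / 2) ∂jacobiMeasure (1 / 2) (1 / 2) =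
      ENNReal.ofReal Real.pi * eulerDouble (1 / 2) b (c - 1 / 2) (1 / 2) (1 / 2) := by
  rw [eulerDouble, ← lintegral_const_mul' _ _ ENNReal.ofReal_ne_top,
    ← lintegral_jacobiMeasure_one_sub]
  refine lintegral_jacobiMeasure_congr_right _ _ fun u hu => ?_
  rw [lintegral_lintegral_swap (by fun_prop), ← lintegral_const_mul' _ _ ENNReal.ofReal_ne_top]
  refine lintegral_jacobiMeasure_congr fun t ht => ?_
  have ht0 : 0 < t := ht.1
  have ht1 : 0 < 1 - t := sub_pos.2 ht.2
  have htu : 0 < 1 - t * u := sub_pos.2 (mul_mem_Ioo_zero_one ht hu).2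
  have e : 1 - t + t * (1 - u) = 1 - t * u := by ring
  have h := lintegral_arcsine_inv_add_mul (A := 1 - t) (B := t * (1 - u)) ht1 (by rwa [e])
  rw [e] at h
  have h' : ∫⁻ v, ENNReal.ofReal ((1 - t + t * ((1 - u) * v))⁻¹) ∂jacobiMeasure (1 / 2) (1 / 2) =
      ENNReal.ofReal Real.pi *
        ENNReal.ofReal ((1 - t) ^ (-(1 / 2) : ℝ) * (1 - t * u) ^ (-(1 / 2) : ℝ)) := by
    rw [← h]
    refine lintegral_congr fun v => ?_
    congr 3
    ring
  have hpi := Real.pi_pos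
  rw [h', ← ENNReal.ofReal_mul hpi.le, ← ENNReal.ofReal_mul hpi.le,
    ← ENNReal.ofReal_mul (by positivity), ← ENNReal.ofReal_mul (by positivity),
    show c - 1 / 2 - 1 = c - 1 + -(1 / 2) by ring, Real.rpow_add ht1]
  congr 1
  ring

/-- A three-term relation between values of `₃F₂(1)`. -/
lemma eulerDouble_three_term {α β q : ℝ} (hβ : 0 < β) (hβ1 : β < 1) (hq : 0 < q) (hq1 : q < 1)
    (hα : α = 1 - q - β) :
    ENNReal.ofReal (betaFn q (1 - q)) *
        (ENNReal.ofReal Real.pi * eulerDouble (1 / 2) α β (1 / 2) (1 / 2)) =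
      ENNReal.ofReal (betaFn β (1 - β) * betaFn q (1 - q)) *
          eulerDouble (1 - β) (q + 1 / 2) (1 / 2) (q + 1 / 2) (1 / 2) +
        ENNReal.ofReal (betaFn β (1 - β)) *
          (ENNReal.ofReal Real.pi * eulerDouble (1 / 2) α (q + 1 / 2) (1 / 2) (1 / 2)) := by
  have hMβ := betaFn_pos hβ (sub_pos.2 hβ1)
  have hMq := betaFn_pos hq (sub_pos.2 hq1)
  have hmid : ∫⁻ u, ∫⁻ v, ENNReal.ofReal
        (betaFn β (1 - β) * betaFn q (1 - q) * ((u * v) ^ q * (1 - u * v) ^ (β - 1)))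
        ∂jacobiMeasure (1 / 2) (1 / 2) ∂jacobiMeasure (1 / 2) (1 / 2) =
      ENNReal.ofReal (betaFn β (1 - β) * betaFn q (1 - q)) *
          eulerDouble (1 - β) (q + 1 / 2) (1 / 2) (q + 1 / 2) (1 / 2) := by
    rw [eulerDouble, ← lintegral_const_mul' _ _ ENNReal.ofReal_ne_top]
    have e : jacobiMeasure (q + 1 / 2) (1 / 2) = jacobiMeasure (1 / 2 + q) (1 / 2 + 0) := by
      rw [add_comm, add_zero]
    simp_rw [e, ← lintegral_jacobiMeasure_add]
    refine lintegral_jacobiMeasure_congr_right _ _ fun u hu => ?_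
    rw [← lintegral_const_mul' _ _ ENNReal.ofReal_ne_top,
      ← lintegral_const_mul' _ _ ENNReal.ofReal_ne_top]
    refine lintegral_jacobiMeasure_congr_right _ _ fun v hv => ?_
    have hu0 := hu.1
    have hv0 := hv.1
    have huv := sub_pos.2 (mul_mem_Ioo_zero_one hu hv).2
    rw [← ENNReal.ofReal_mul (by positivity), Real.rpow_zero, Real.rpow_zero,
      ← ENNReal.ofReal_mul (by positivity), ← ENNReal.ofReal_mul (by positivity),
      Real.mul_rpow hu0.le hv0.le, neg_sub, mul_comm v u]
    congr 1
    ring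
  have e : q + 1 / 2 = q + 1 - 1 / 2 := by ring
  rw [← hmid, e, ← lintegral_arcsine_inv_one_sub, ← lintegral_arcsine_inv_one_sub_add,
    ← lintegral_const_mul' _ _ ENNReal.ofReal_ne_top,
    ← lintegral_const_mul' _ _ ENNReal.ofReal_ne_top, ← lintegral_add_left (by fun_prop)]
  refine lintegral_jacobiMeasure_congr_right _ _ fun u hu => ?_
  rw [← lintegral_const_mul' _ _ ENNReal.ofReal_ne_top,
    ← lintegral_const_mul' _ _ ENNReal.ofReal_ne_top, ← lintegral_add_left (by fun_prop)]
  refine lintegral_jacobiMeasure_congr_right _ _ fun v hv => ?_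
  have hw := mul_mem_Ioo_zero_one hu hv
  rw [hα, ← setLIntegral_Ioi_eq_jacobi_left _ _ hw, ← setLIntegral_Ioi_eq_jacobi_right _ _ hw]
  exact stieltjes_rpow_mul_rpow hβ hβ1 hq hq1 hw

lemma threeF2_swap_left (a1 a2 a3 b1 b2 : ℝ) :
    threeF2 a1 a2 a3 b1 b2 = threeF2 a2 a1 a3 b1 b2 := by
  simp_rw [threeF2, mul_comm (poch a1 _)]

lemma threeF2_swap_right (a1 a2 a3 b1 b2 : ℝ) :
    threeF2 a1 a2 a3 b1 b2 = threeF2 a1 a3 a2 b1 b2 := by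
  simp_rw [threeF2, mul_right_comm (poch a1 _)]

lemma threeF2_swap_lower (a1 a2 a3 b1 b2 : ℝ) :
    threeF2 a1 a2 a3 b1 b2 = threeF2 a1 a2 a3 b2 b1 := by
  simp_rw [threeF2, mul_comm (poch b1 _)]

/-- `Fval` without its algebraic normalization. -/
noncomputable def hypK (r s : ℝ) : ℝ :=
  betaFn r (s - r) * threeF2 (1 / 2) (1 / 2) r 1 s

lemma toReal_eulerDouble_half {r s : ℝ} (hr : 0 < r) (hrs : r < s) :
    (eulerDouble (1 / 2) r (s - r) (1 / 2) (1 / 2)).toReal = Real.pi * hypK r s := by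
  rw [toReal_eulerDouble one_half_pos hr (sub_pos.2 hrs) one_half_pos one_half_pos,
    betaFn_half_half, hypK, threeF2_swap_right, threeF2_swap_lower, add_halves, add_sub_cancel]
  ring

lemma eulerDouble_half_ne_top {α β : ℝ} (hα : 0 < α) (hβ : 0 < β) (hβ1 : β < 1) :
    eulerDouble (1 / 2) α β (1 / 2) (1 / 2) ≠ ⊤ := by
  have hle : eulerDouble (1 / 2) α β (1 / 2) (1 / 2) ≤
      ENNReal.ofReal (betaFn α (β / 2)) * ENNReal.ofReal (betaFn (1 / 2) (β / 2)) := by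
    have e1 := lintegral_jacobiMeasure_add α β 0 (-(β / 2)) 1
    have e2 := lintegral_jacobiMeasure_add (1 / 2) (1 / 2) 0 (-(1 / 2 - β / 2)) 1
    rw [add_zero, show β + -(β / 2) = β / 2 by ring] at e1
    rw [add_zero, show 1 / 2 + -(1 / 2 - β / 2) = β / 2 by ring] at e2
    simp only [Pi.one_apply] at e1 e2
    rw [← lintegral_jacobiMeasure_one hα (half_pos hβ),
      ← lintegral_jacobiMeasure_one one_half_pos (half_pos hβ), ← e1, ← e2,
      ← lintegral_const_mul _ (by fun_prop), eulerDouble, lintegral_jacobiMeasure,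
      lintegral_jacobiMeasure]
    refine setLIntegral_mono' measurableSet_Ioo fun y hy => ?_
    gcongr
    rw [← lintegral_mul_const _ (by fun_prop), lintegral_jacobiMeasure, lintegral_jacobiMeasure]
    refine setLIntegral_mono' measurableSet_Ioo fun x hx => ?_
    gcongr
    have hx1 : 0 < 1 - x := sub_pos.2 hx.2
    have hy1 : 0 < 1 - y := sub_pos.2 hy.2
    have hxy := sub_pos.2 (mul_mem_Ioo_zero_one hx hy).2
    rw [mul_one, mul_one, ← ENNReal.ofReal_mul (by have := hx.1; positivity)]
    refine ENNReal.ofReal_le_ofReal ?_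
    rw [Real.rpow_zero, Real.rpow_zero, one_mul, one_mul,
      show -(1 / 2 : ℝ) = -(β / 2) + -(1 / 2 - β / 2) by ring, Real.rpow_add hxy]
    have h1 : 1 - x ≤ 1 - x * y := by nlinarith [mul_pos hx.1 hy1]
    have h2 : 1 - y ≤ 1 - x * y := by nlinarith [mul_pos hy.1 hx1]
    exact mul_le_mul (Real.rpow_le_rpow_of_nonpos hx1 h1 (by linarith))
      (Real.rpow_le_rpow_of_nonpos hy1 h2 (by linarith)) (by positivity) (by positivity)
  exact ne_top_of_le_ne_top (ENNReal.mul_ne_top ENNReal.ofReal_ne_top ENNReal.ofReal_ne_top) hle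

lemma pi_mul_hypK {r s : ℝ} (hr : 0 < r) (hrs : r < s) (hs : 1 / 2 < s) :
    Real.pi * hypK r s = betaFn (s - r) r * betaFn (1 / 2) (s - r) *
      threeF2 (s - 1 / 2) (s - r) (1 / 2) s (s - r + 1 / 2) := by
  have h := sub_pos.2 hrs
  rw [← toReal_eulerDouble_half hr hrs, eulerDouble_thomae,
    show r + (s - r) - 1 / 2 = s - 1 / 2 by ring,
    show 1 / 2 + (s - r) - 1 / 2 = s - r by ring,
    toReal_eulerDouble (sub_pos.2 hs) h hr one_half_pos h, sub_add_cancel, add_comm (1 / 2)]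

lemma hypK_transformation {r s : ℝ} (hr : 0 < r) (hr1 : r < 1) (hrs : r < s) (hs : 1 / 2 < s) :
    hypK r s * (Real.Gamma (1 - r) * Real.Gamma (s - 1 / 2) ^ 2) =
      hypK (1 - r) (s - r + 1 / 2) * (Real.Gamma r * Real.Gamma (s - r) ^ 2) := by
  have h1 := pi_mul_hypK hr hrs hs
  have h2 := pi_mul_hypK (r := 1 - r) (s := s - r + 1 / 2) (by linarith) (by linarith)
    (by linarith)
  rw [show s - r + 1 / 2 - (1 - r) = s - 1 / 2 by ring, add_sub_cancel_right, sub_add_cancel,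
    threeF2_swap_left, threeF2_swap_lower] at h2
  rw [betaFn, betaFn, sub_add_cancel, add_comm (1 / 2)] at h1
  rw [betaFn, betaFn, show s - 1 / 2 + (1 - r) = s - r + 1 / 2 by ring, add_sub_cancel] at h2
  refine mul_left_cancel₀ Real.pi_ne_zero ?_
  linear_combination Real.Gamma (1 - r) * Real.Gamma (s - 1 / 2) ^ 2 * h1 -
    Real.Gamma r * Real.Gamma (s - r) ^ 2 * h2

lemma toReal_eulerDouble_middle {β q : ℝ} (hβ : 0 < β) (hβ1 : β < 1) (hq : 0 < q) :
    (eulerDouble (1 - β) (q + 1 / 2) (1 / 2) (q + 1 / 2) (1 / 2)).toReal =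
      Real.pi * hypK β (β + (q + 1 / 2)) := by
  have hq2 : 0 < q + 1 / 2 := by positivity
  have hβq : 0 < β + q := by positivity
  have hβ' := sub_pos.2 hβ1
  have h := congrArg ENNReal.toReal (eulerDouble_thomae (1 / 2) (β + q) (1 - β) (q + 1 / 2) β)
  rw [show β + q + (1 - β) - 1 / 2 = q + 1 / 2 by ring,
    show β + (1 - β) - 1 / 2 = 1 / 2 by ring,
    toReal_eulerDouble one_half_pos hβq hβ' hq2 hβ,
    toReal_eulerDouble hq2 hβ' hβq hq2 one_half_pos, betaFn_comm (1 - β), mul_assoc, mul_assoc]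
    at h
  have h' := mul_left_cancel₀ (betaFn_pos hβq hβ').ne' h
  rw [show β + q + (1 - β) = q + 1 / 2 + 1 / 2 by ring,
    show 1 - β + (β + q) = q + 1 / 2 + 1 / 2 by ring, threeF2_swap_left (q + 1 / 2),
    threeF2_swap_left (1 / 2), threeF2_swap_right, threeF2_swap_lower, add_comm _ β] at h'
  rw [toReal_eulerDouble hβ' hq2 one_half_pos hq2 one_half_pos, pi_mul_hypK hβ (by linarith)
    (by linarith), add_sub_cancel_left, mul_assoc, show β + (q + 1 / 2) - 1 / 2 = β + q by ring,
    ← h', betaFn_comm (1 / 2)]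
  ring

lemma betaFn_one_sub {x : ℝ} : betaFn x (1 - x) = Real.pi / Real.sin (Real.pi * x) := by
  rw [betaFn, add_sub_cancel, Real.Gamma_one, div_one, Real.Gamma_mul_Gamma_one_sub]

lemma hypK_three_term {α β q : ℝ} (hα0 : 0 < α) (hβ : 0 < β) (hβ1 : β < 1) (hq : 0 < q)
    (hq1 : q < 1) (hα : α = 1 - q - β) :
    Real.sin (Real.pi * β) * hypK α (α + β) =
      hypK β (β + (q + 1 / 2)) + Real.sin (Real.pi * q) * hypK α (α + (q + 1 / 2)) := by
  have hMβ := betaFn_pos hβ (sub_pos.2 hβ1)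
  have hMq := betaFn_pos hq (sub_pos.2 hq1)
  have h := eulerDouble_three_term hβ hβ1 hq hq1 hα
  have hne : ENNReal.ofReal (betaFn q (1 - q)) *
      (ENNReal.ofReal Real.pi * eulerDouble (1 / 2) α β (1 / 2) (1 / 2)) ≠ ⊤ :=
    ENNReal.mul_ne_top ENNReal.ofReal_ne_top
      (ENNReal.mul_ne_top ENNReal.ofReal_ne_top (eulerDouble_half_ne_top hα0 hβ hβ1))
  have hne' := hne
  rw [h, ENNReal.add_ne_top] at hne'
  have h' := congrArg ENNReal.toReal h
  have e1 := toReal_eulerDouble_half hα0 (lt_add_of_pos_right α hβ)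
  have e2 := toReal_eulerDouble_half hα0 (lt_add_of_pos_right α (show 0 < q + 1 / 2 by positivity))
  rw [add_sub_cancel_left] at e1 e2
  rw [ENNReal.toReal_add hne'.1 hne'.2] at h'
  simp only [ENNReal.toReal_mul, ENNReal.toReal_ofReal hMq.le, ENNReal.toReal_ofReal hMβ.le,
    ENNReal.toReal_ofReal Real.pi_pos.le, ENNReal.toReal_ofReal (mul_pos hMβ hMq).le, e1, e2,
    toReal_eulerDouble_middle hβ hβ1 hq] at h'
  rw [betaFn_one_sub, betaFn_one_sub] at h'
  have s1 : 0 < Real.sin (Real.pi * β) :=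
    Real.sin_pos_of_pos_of_lt_pi (by positivity) (by nlinarith [Real.pi_pos])
  have s2 : 0 < Real.sin (Real.pi * q) :=
    Real.sin_pos_of_pos_of_lt_pi (by positivity) (by nlinarith [Real.pi_pos])
  have hpi := Real.pi_pos
  generalize hypK α (α + β) = A, hypK β (β + (q + 1 / 2)) = B, hypK α (α + (q + 1 / 2)) = C at *
  field_simp at h'
  linarith

lemma sin_three_pi_div_eight : Real.sin (Real.pi * (3 / 8)) = (1 + √2) * Real.sin (Real.pi / 8) := by
  have h2 := Real.cos_sq_add_sin_sq (Real.pi / 8)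
  have h3 : Real.sin (Real.pi / 8) * Real.cos (Real.pi / 8) = √2 / 4 := by
    have h := Real.sin_two_mul (Real.pi / 8)
    rw [show 2 * (Real.pi / 8) = Real.pi / 4 by ring, Real.sin_pi_div_four] at h
    linarith
  have h4 : Real.cos (Real.pi / 8) ^ 2 - Real.sin (Real.pi / 8) ^ 2 = √2 / 2 := by
    rw [← Real.cos_two_mul', ← Real.cos_pi_div_four]
    congr 1
    ring
  have hs : Real.sin (Real.pi / 8) ≠ 0 := by
    rintro h
    rw [h, zero_mul] at h3
    exact (show √2 / 4 ≠ 0 by positivity) h3.symm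
  rw [show Real.pi * (3 / 8) = Real.pi / 2 - Real.pi / 8 by ring, Real.sin_pi_div_two_sub]
  refine mul_left_cancel₀ hs ?_
  have h5 : √2 ^ 2 = 2 := Real.sq_sqrt zero_le_two
  linear_combination h3 - (1 + √2) / 2 * (h2 - h4) + h5 / 4

lemma four_mul_sin_pi_div_eight_sq : 4 * Real.sin (Real.pi / 8) ^ 2 = 2 - √2 := by
  have h2 := Real.cos_sq_add_sin_sq (Real.pi / 8)
  have h4 : Real.cos (Real.pi / 8) ^ 2 - Real.sin (Real.pi / 8) ^ 2 = √2 / 2 := by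
    rw [← Real.cos_two_mul', ← Real.cos_pi_div_four]
    congr 1
    ring
  linarith

lemma hypK_three_quarters_left : Real.sin (Real.pi / 8) * (1 + √2) * hypK (1 / 8) (3 / 4) =
    hypK (5 / 8) (11 / 8) + √2 / 2 * hypK (1 / 8) (7 / 8) := by
  have h := hypK_three_term (α := 1 / 8) (β := 5 / 8) (q := 1 / 4) (by norm_num) (by norm_num)
    (by norm_num) (by norm_num) (by norm_num) (by norm_num)
  rw [show Real.pi * (5 / 8) = Real.pi - Real.pi * (3 / 8) by ring, Real.sin_pi_sub,
    sin_three_pi_div_eight, mul_one_div, Real.sin_pi_div_four] at h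
  norm_num at h ⊢
  linarith

lemma hypK_three_quarters_right : Real.sin (Real.pi / 8) * hypK (5 / 8) (3 / 4) =
    hypK (1 / 8) (7 / 8) + √2 / 2 * hypK (5 / 8) (11 / 8) := by
  have h := hypK_three_term (α := 5 / 8) (β := 1 / 8) (q := 1 / 4) (by norm_num) (by norm_num)
    (by norm_num) (by norm_num) (by norm_num) (by norm_num)
  rw [mul_one_div, mul_one_div, Real.sin_pi_div_four] at h
  norm_num at h ⊢
  linarith

lemma Gamma_mul_Gamma_one_sub_eighths :
    Real.Gamma (1 / 8) * Real.Gamma (7 / 8) * Real.sin (Real.pi / 8) = Real.pi ∧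
    Real.Gamma (3 / 8) * Real.Gamma (5 / 8) * ((1 + √2) * Real.sin (Real.pi / 8)) = Real.pi ∧
    Real.Gamma (1 / 4) * Real.Gamma (3 / 4) = √2 * Real.pi := by
  have hpi := Real.pi_pos
  have h1 := Real.Gamma_mul_Gamma_one_sub (1 / 8)
  have h3 := Real.Gamma_mul_Gamma_one_sub (3 / 8)
  have h4 := Real.Gamma_mul_Gamma_one_sub (1 / 4)
  have s1 : 0 < Real.sin (Real.pi / 8) :=
    Real.sin_pos_of_pos_of_lt_pi (by positivity) (by linarith)
  rw [mul_one_div] at h1 h4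
  rw [sin_three_pi_div_eight] at h3
  rw [Real.sin_pi_div_four] at h4
  norm_num [-Real.sin_pi_div_eight] at h1 h3 h4
  have h5 : √2 ^ 2 = 2 := Real.sq_sqrt zero_le_two
  refine ⟨?_, ?_, ?_⟩
  · rw [h1]; field_simp
  · rw [h3]; field_simp
  · rw [h4]; field_simp; linarith

lemma exists_Gamma_mul_Gamma_add_half_eighths : ∃ p : ℝ, 0 < p ∧ √2 * p ^ 2 = 2 * Real.pi ∧
    Real.Gamma (1 / 8) * Real.Gamma (5 / 8) = √2 * p * Real.Gamma (1 / 4) ∧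
    Real.Gamma (3 / 8) * Real.Gamma (7 / 8) = p * Real.Gamma (3 / 4) := by
  have h1 := Real.Gamma_mul_Gamma_add_half (1 / 8)
  have h3 := Real.Gamma_mul_Gamma_add_half (3 / 8)
  have hpi := Real.pi_pos
  norm_num at h1 h3
  refine ⟨2 ^ (1 / 4 : ℝ) * √Real.pi, by positivity, ?_, ?_, ?_⟩
  · rw [mul_pow, Real.sq_sqrt hpi.le, ← Real.rpow_natCast, ← Real.rpow_mul zero_le_two,
      Real.sqrt_eq_rpow, ← mul_assoc, ← Real.rpow_add zero_lt_two]
    norm_num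
  · rw [h1, Real.sqrt_eq_rpow 2, ← mul_assoc (2 ^ _), ← Real.rpow_add zero_lt_two]
    norm_num
    ring
  · rw [h3]
    ring

lemma hypK_eighths :
    hypK (7 / 8) (9 / 8) = (1 + √2) * Real.sin (Real.pi / 8) * hypK (1 / 8) (3 / 4) ∧
    hypK (3 / 8) (5 / 8) = Real.sin (Real.pi / 8) * hypK (5 / 8) (3 / 4) ∧
    hypK (7 / 8) (5 / 4) = √2 * Real.sin (Real.pi / 8) * hypK (1 / 8) (7 / 8) ∧
    hypK (3 / 8) (5 / 4) = √2 * ((1 + √2) * Real.sin (Real.pi / 8)) * hypK (5 / 8) (11 / 8) := by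
  obtain ⟨p, hp, hp2, d1, d3⟩ := exists_Gamma_mul_Gamma_add_half_eighths
  obtain ⟨r1, r3, r4⟩ := Gamma_mul_Gamma_one_sub_eighths
  have t1 := hypK_transformation (r := 1 / 8) (s := 3 / 4) (by norm_num) (by norm_num)
    (by norm_num) (by norm_num)
  have t2 := hypK_transformation (r := 5 / 8) (s := 3 / 4) (by norm_num) (by norm_num)
    (by norm_num) (by norm_num)
  have t3 := hypK_transformation (r := 1 / 8) (s := 7 / 8) (by norm_num) (by norm_num)
    (by norm_num) (by norm_num)
  have t4 := hypK_transformation (r := 5 / 8) (s := 11 / 8) (by norm_num) (by norm_num)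
    (by norm_num) (by norm_num)
  norm_num at t1 t2 t3 t4
  have hw : √2 ^ 2 = 2 := Real.sq_sqrt zero_le_two
  have hw0 : √2 ≠ 0 := by positivity
  have x1 : Real.Gamma (1 / 8) ≠ 0 := (Real.Gamma_pos_of_pos (by norm_num)).ne'
  have x3 : Real.Gamma (3 / 8) ≠ 0 := (Real.Gamma_pos_of_pos (by norm_num)).ne'
  have x5 : Real.Gamma (5 / 8) ≠ 0 := (Real.Gamma_pos_of_pos (by norm_num)).ne'
  have x7 : Real.Gamma (7 / 8) ≠ 0 := (Real.Gamma_pos_of_pos (by norm_num)).ne'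
  have y3 : Real.Gamma (3 / 4) ≠ 0 := (Real.Gamma_pos_of_pos (by norm_num)).ne'
  generalize Real.sin (Real.pi / 8) = σ at *
  generalize Real.Gamma (1 / 8) = a1, Real.Gamma (3 / 8) = a3, Real.Gamma (5 / 8) = a5,
    Real.Gamma (7 / 8) = a7, Real.Gamma (1 / 4) = b1, Real.Gamma (3 / 4) = b3 at *
  generalize √2 = w at *
  have hp3 : p ^ 2 = w * Real.pi := by
    refine mul_left_cancel₀ hw0 ?_
    linear_combination hp2 - Real.pi * hw
  refine ⟨?_, ?_, ?_, ?_⟩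
  · have h : a7 * b1 ^ 2 = (1 + w) * σ * (a1 * a5 ^ 2) := by
      refine mul_left_cancel₀ x3 ?_
      linear_combination b1 ^ 2 * d3 + p * b1 * r4 - (1 + w) * σ * a3 * a5 * d1 - w * p * b1 * r3
    refine mul_right_cancel₀ (mul_ne_zero x1 (pow_ne_zero 2 x5)) ?_
    linear_combination hypK (1 / 8) (3 / 4) * h - t1
  · have h : a3 * b1 ^ 2 = σ * (a5 * a1 ^ 2) := by
      refine mul_left_cancel₀ x7 ?_
      linear_combination b1 ^ 2 * d3 + p * b1 * r4 - σ * a1 * a7 * d1 - w * p * b1 * r1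
    refine mul_right_cancel₀ (mul_ne_zero x5 (pow_ne_zero 2 x1)) ?_
    linear_combination hypK (5 / 8) (3 / 4) * h - t2
  · have h : a7 * a3 ^ 2 = w * σ * (a1 * b3 ^ 2) := by
      refine mul_left_cancel₀ x7 ?_
      linear_combination (a3 * a7 + p * b3) * d3 + b3 ^ 2 * hp3 - w * b3 ^ 2 * r1
    refine mul_right_cancel₀ (mul_ne_zero x1 (pow_ne_zero 2 y3)) ?_
    linear_combination hypK (1 / 8) (7 / 8) * h - t3
  · have h : a3 * a7 ^ 2 = w * ((1 + w) * σ) * (a5 * b3 ^ 2) := by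
      refine mul_left_cancel₀ x3 ?_
      linear_combination (a3 * a7 + p * b3) * d3 + b3 ^ 2 * hp3 - w * b3 ^ 2 * r3
    refine mul_right_cancel₀ (mul_ne_zero x5 (pow_ne_zero 2 y3)) ?_
    linear_combination hypK (5 / 8) (11 / 8) * h - t4

lemma Fval_of_den_eq_eight {r : ℚ} (s : ℚ) (k : ℕ) (hd : r.den = 8)
    (hr : (r : ℝ) = (1 + 2 * k) / 8) : Fval r s = √2 / 2 ^ k / 16 * hypK r s := by
  rw [Fval, hypK, hd, show (1 : ℝ) - 4 * r = 1 / 2 - k by rw [hr]; ring,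
    Real.rpow_sub_natCast two_ne_zero, Real.sqrt_eq_rpow]
  ring

end EulerIntegrals

open Complex in
/-- L(f_{1/8,3/4},1)² = (2 − √2 − 4i·(√2 − 1))·L(f_{1/8,7/8},1)², with the L-values
expressed as linear combinations of normalized hypergeometric values
(note √(3 − 2√2) = √2 − 1). -/
theorem lvalue_relation_class7 :
    ((Fval (1/8) (3/4) : ℂ) + 2 * I * (Real.sqrt 2 : ℂ) * (Fval (3/8) (5/4) : ℂ) +
        4 * (Fval (5/8) (3/4) : ℂ) -
        8 * I * (Real.sqrt 2 : ℂ) * (Fval (7/8) (5/4) : ℂ)) ^ 2 =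
      (2 - (Real.sqrt 2 : ℂ) - 4 * I * ((Real.sqrt 2 : ℂ) - 1)) *
        ((Fval (1/8) (7/8) : ℂ) + 2 * (Real.sqrt 2 : ℂ) * (Fval (3/8) (5/8) : ℂ) +
          4 * I * (Fval (5/8) (11/8) : ℂ) +
          8 * I * (Real.sqrt 2 : ℂ) * (Fval (7/8) (9/8) : ℂ)) ^ 2 := by
  have hw : √2 ^ 2 = 2 := Real.sq_sqrt zero_le_two
  have A1 : Fval (1 / 8) (3 / 4) = √2 / 16 * hypK (1 / 8) (3 / 4) :=
    (Fval_of_den_eq_eight _ 0 (by norm_num) (by norm_num)).trans (by norm_num [div_div])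
  have A2 : Fval (3 / 8) (5 / 4) = √2 / 32 * hypK (3 / 8) (5 / 4) :=
    (Fval_of_den_eq_eight _ 1 (by norm_num) (by norm_num)).trans (by norm_num [div_div])
  have A3 : Fval (5 / 8) (3 / 4) = √2 / 64 * hypK (5 / 8) (3 / 4) :=
    (Fval_of_den_eq_eight _ 2 (by norm_num) (by norm_num)).trans (by norm_num [div_div])
  have A4 : Fval (7 / 8) (5 / 4) = √2 / 128 * hypK (7 / 8) (5 / 4) :=
    (Fval_of_den_eq_eight _ 3 (by norm_num) (by norm_num)).trans (by norm_num [div_div])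
  have B1 : Fval (1 / 8) (7 / 8) = √2 / 16 * hypK (1 / 8) (7 / 8) :=
    (Fval_of_den_eq_eight _ 0 (by norm_num) (by norm_num)).trans (by norm_num [div_div])
  have B2 : Fval (3 / 8) (5 / 8) = √2 / 32 * hypK (3 / 8) (5 / 8) :=
    (Fval_of_den_eq_eight _ 1 (by norm_num) (by norm_num)).trans (by norm_num [div_div])
  have B3 : Fval (5 / 8) (11 / 8) = √2 / 64 * hypK (5 / 8) (11 / 8) :=
    (Fval_of_den_eq_eight _ 2 (by norm_num) (by norm_num)).trans (by norm_num [div_div])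
  have B4 : Fval (7 / 8) (9 / 8) = √2 / 128 * hypK (7 / 8) (9 / 8) :=
    (Fval_of_den_eq_eight _ 3 (by norm_num) (by norm_num)).trans (by norm_num [div_div])
  obtain ⟨t1, t2, t3, t4⟩ := hypK_eighths
  have q1 := hypK_three_quarters_left
  have q3 := hypK_three_quarters_right
  have hσ := four_mul_sin_pi_div_eight_sq
  rw [mul_comm (Real.sin _) (1 + √2), ← t1] at q1
  rw [← t2] at q3
  rw [A1, A2, A3, A4, B1, B2, B3, B4, q1, q3, t3, t4]
  rw [t1] at q1
  rw [t2] at q3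
  generalize Real.sin (Real.pi / 8) = σ, √2 = w, hypK (1 / 8) (3 / 4) = a1,
    hypK (5 / 8) (3 / 4) = a3, hypK (1 / 8) (7 / 8) = b1, hypK (5 / 8) (11 / 8) = b3 at *
  have hs : 2 * w * σ ^ 2 * (1 + w) = 1 := by
    linear_combination w * (1 + w) / 2 * hσ + (1 - w) / 2 * hw
  have e1 : a1 = 2 * σ * (w * b3 + b1) := by
    linear_combination 2 * w * σ * q1 - a1 * hs + σ * b1 * hw
  have e3 : a3 = 2 * σ * ((w + 2) * b1 + (1 + w) * b3) := by
    linear_combination 2 * w * σ * (1 + w) * q3 - a3 * hs + (2 * σ * b1 + σ * (1 + w) * b3) * hw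
  rw [e1, e3]
  push_cast
  have hwC : (w : ℂ) ^ 2 = 2 := by exact_mod_cast hw
  have hσC : 4 * (σ : ℂ) ^ 2 = 2 - w := by exact_mod_cast hσ
  have hI := I_sq
  generalize (w : ℂ) = w, (σ : ℂ) = σ, (b1 : ℂ) = b1, (b3 : ℂ) = b3, I = i at *
  have key : ∀ x y : ℂ, x = 2 * σ * (w - i) * y →
      x ^ 2 = (2 - w - 4 * i * (w - 1)) * y ^ 2 := by
    rintro x y rfl
    grind
  apply key
  grind
end

section
/- Let r, s be rational numbers such that A = 16s−8r−12, B = 8r+8s−12 and C = 24s−30 are all integers (the exponents for the pair (s−r, s) are then also integers). Then for every τ in the upper half-plane, 𝕂₂(r,s)(−1/τ) = (−iτ)³ · 2^{4s−8r} · 𝕂₂(s−r, s)(τ), where 2^{4s−8r} denotes the positive real power of 2. (This is the Atkin–Lehner-type involution relating 𝕂₂(r,s) to 𝕂₂(s−r,s), proved from η(−1/τ) = √(−iτ)·η(τ).) -/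
/-- The Dedekind eta function η(τ) = e^{πiτ/12}·∏_{n=1}^∞ (1 − e^{2πinτ}). -/
noncomputable def eta (τ : ℂ) : ℂ :=
  Complex.exp ((Real.pi : ℂ) * Complex.I * τ / 12) *
    ∏' n : ℕ, (1 - Complex.exp (2 * (Real.pi : ℂ) * Complex.I * ((n : ℂ) + 1) * τ))

/-- The eta quotient 𝕂₂ with integer exponents A, B, C:
𝕂₂(τ) = η(τ/2)^A · η(2τ)^B · η(τ)^{−C}. -/
noncomputable def K2exp (A B C : ℤ) (τ : ℂ) : ℂ :=
  eta (τ / 2) ^ A * eta (2 * τ) ^ B * eta τ ^ (-C)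

theorem eta_eq_modularForm_eta (τ : ℂ) : eta τ = ModularForm.eta τ := by
  simp only [eta, ModularForm.eta, ModularForm.eta_q_eq_cexp, Function.Periodic.qParam]
  congr 2
  push_cast
  ring

/-- The function `√(-iτ)`, in the form in which it occurs in `ModularForm.eta_comp_eq_csqrt_I_inv`. -/
noncomputable def sqrtNegIMul (τ : ℂ) : ℂ :=
  (Complex.sqrt Complex.I)⁻¹ * Complex.sqrt τ

theorem sqrtNegIMul_sq (τ : ℂ) : sqrtNegIMul τ ^ 2 = -Complex.I * τ := by
  have h (z : ℂ) : Complex.sqrt z ^ 2 = z := by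
    simp [Complex.sqrt]
  rw [sqrtNegIMul, mul_pow, inv_pow, h, h, Complex.inv_I]

theorem sqrtNegIMul_ofReal_mul {c : ℝ} (hc : 0 < c) (τ : ℂ) :
    sqrtNegIMul (c * τ) = (√c : ℝ) * sqrtNegIMul τ := by
  have h : ((c : ℂ) ^ (2⁻¹ : ℂ)) = ((√c : ℝ) : ℂ) := by
    rw [Real.sqrt_eq_rpow, Complex.ofReal_cpow hc.le]
    norm_num
  rcases eq_or_ne τ 0 with rfl | hτ
  · simp [sqrtNegIMul]
  have hc0 : (c : ℂ) ≠ 0 := by exact_mod_cast hc.ne'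
  simp only [sqrtNegIMul, Complex.sqrt]
  rw [← h, Complex.cpow_def_of_ne_zero (mul_ne_zero hc0 hτ), Complex.cpow_def_of_ne_zero hc0,
    Complex.cpow_def_of_ne_zero hτ, Complex.log_ofReal_mul hc hτ, add_mul, Complex.exp_add,
    Complex.ofReal_log hc.le]
  ring

theorem eta_neg_one_div {τ : ℂ} (hτ : 0 < τ.im) : eta (-1 / τ) = sqrtNegIMul τ * eta τ := by
  simpa [eta_eq_modularForm_eta, sqrtNegIMul, mul_assoc] using
    ModularForm.eta_comp_eq_csqrt_I_inv (x := τ) hτ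

/-- The Atkin–Lehner-type involution: if the exponents A = 16s−8r−12, B = 8r+8s−12,
C = 24s−30 of 𝕂₂(r,s) are integers (and A′, B′, C′ are the corresponding exponents
for the pair (s−r, s)), then for all τ in the upper half-plane
𝕂₂(r,s)(−1/τ) = (−iτ)³·2^{4s−8r}·𝕂₂(s−r,s)(τ), with 2^{4s−8r} the positive real
power of 2. -/
theorem K2_atkin_lehner (r s : ℚ) (A B C A' B' C' : ℤ)
    (hA : (A : ℚ) = 16*s - 8*r - 12) (hB : (B : ℚ) = 8*r + 8*s - 12)
    (hC : (C : ℚ) = 24*s - 30)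
    (hA' : (A' : ℚ) = 16*s - 8*(s - r) - 12)
    (hB' : (B' : ℚ) = 8*(s - r) + 8*s - 12)
    (hC' : (C' : ℚ) = 24*s - 30) :
    ∀ τ : ℂ, 0 < τ.im →
      K2exp A B C (-1 / τ) =
        (-Complex.I * τ) ^ 3 * (((2:ℝ) ^ (4*(s:ℝ) - 8*(r:ℝ)) : ℝ) : ℂ) *
          K2exp A' B' C' τ := by
  intro τ hτ
  obtain rfl : A' = B := by exact_mod_cast (by linarith : (A' : ℚ) = B)
  obtain rfl : B' = A := by exact_mod_cast (by linarith : (B' : ℚ) = A)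
  obtain rfl : C' = C := by exact_mod_cast (by linarith : (C' : ℚ) = C)
  have hsum : B' + A' + -C' = 6 := by
    exact_mod_cast (by push_cast; linarith : ((B' + A' + -C' : ℤ) : ℚ) = 6)
  have hw := sqrtNegIMul_sq τ
  have hw0 : sqrtNegIMul τ ≠ 0 := by
    intro h
    rw [h, zero_pow two_ne_zero, eq_comm, mul_eq_zero] at hw
    rcases hw with h | h
    · simp at h
    · simp [h] at hτ
  have h2 : (((√2 : ℝ)) : ℂ) ≠ 0 := by simp
  have hdouble : eta (-1 / τ / 2) = (√2 : ℝ) * sqrtNegIMul τ * eta (2 * τ) := by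
    rw [show -1 / τ / 2 = -1 / (((2 : ℝ) : ℂ) * τ) by push_cast; rw [div_div, mul_comm],
      eta_neg_one_div (by simpa using hτ), sqrtNegIMul_ofReal_mul (by norm_num)]
    simp
  have hhalf : eta (2 * (-1 / τ)) = ((√2 : ℝ) : ℂ)⁻¹ * sqrtNegIMul τ * eta (τ / 2) := by
    rw [show 2 * (-1 / τ) = -1 / (((2⁻¹ : ℝ) : ℂ) * τ) by push_cast; field_simp,
      eta_neg_one_div (by simpa using hτ), sqrtNegIMul_ofReal_mul (by norm_num), Real.sqrt_inv]
    push_cast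
    rw [show (2⁻¹ : ℂ) * τ = τ / 2 by ring]
  have hpow : (2 : ℝ) ^ (4 * (s : ℝ) - 8 * (r : ℝ)) = √2 ^ (B' - A') := by
    have hexp : ((B' - A' : ℤ) : ℝ) = 8 * s - 16 * r := by
      exact_mod_cast (by push_cast; linarith : ((B' - A' : ℤ) : ℚ) = 8 * s - 16 * r)
    rw [← Real.rpow_intCast, Real.sqrt_eq_rpow, ← Real.rpow_mul (by norm_num), hexp]
    ring_nf
  have hcube : (-Complex.I * τ) ^ 3 =
      sqrtNegIMul τ ^ B' * sqrtNegIMul τ ^ A' * sqrtNegIMul τ ^ (-C') := by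
    rw [← zpow_add₀ hw0, ← zpow_add₀ hw0, hsum, ← hw, ← pow_mul]
    norm_cast
  rw [K2exp, K2exp, hdouble, hhalf, eta_neg_one_div hτ, hpow, hcube]
  push_cast
  simp only [mul_zpow, inv_zpow, zpow_sub₀ h2]
  ring
end
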